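/- There exists a map g : 𝒜 → 𝒜 such that g(A + B·P) ≡ g(A) (mod P) for every A, B ∈ 𝒜 and every irreducible P ∈ 𝒫, and such that for every n ∈ ℕ and every B ∈ 𝒜 with deg(B) = n one has q^n ≤ deg(g(B)) < 2·q^n; consequently g is not a polynomial map. -/

import Mathlib

/-!
Build `g B` by recursion on `deg B`. The monic irreducibles `P` of degree at most `n = deg B` are
exactly the monic irreducible factors of `L_n = ∏_{d = 1}^n (X ^ q ^ d - X)`, and for each of them
`B %ₘ P` has degree less than `n`, so `g (B %ₘ P)` is already known. The Chinese remainder theorem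
yields an `r` congruent to `g (B %ₘ P)` modulo every such `P`; reducing `r` modulo `L_n` and adding
`L_n` back keeps these congruences and forces `deg g B = deg L_n = q + q ^ 2 + ⋯ + q ^ n`. For `P`
of larger degree `B %ₘ P = B` and there is nothing to check. Finally, after clearing denominators a
polynomial map has degree growth linear in `deg A`, far slower than `q ^ deg A`.
-/

open Polynomial

section ChineseRemainder

variable {F : Type*} [Field F]

theorem isCoprime_of_irreducible_of_monic_of_ne {P Q : F[X]} (hP : Irreducible P)
    (hQ : Irreducible Q) (hPm : P.Monic) (hQm : Q.Monic) (hne : P ≠ Q) : IsCoprime P Q :=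
  hP.coprime_iff_not_dvd.2 fun hdvd ↦
    hne (eq_of_monic_of_associated hPm hQm (hP.associated_of_dvd hQ hdvd))

theorem finite_monic_irreducible_dvd {T : F[X]} (hT : T ≠ 0) :
    {P : F[X] | P.Monic ∧ Irreducible P ∧ P ∣ T}.Finite := by
  classical
  refine (UniqueFactorizationMonoid.normalizedFactors T).toFinset.finite_toSet.subset ?_
  rintro P ⟨hPm, hPi, hPT⟩
  exact Multiset.mem_toFinset.2 ((Polynomial.mem_normalizedFactors_iff hT).2 ⟨hPi, hPm, hPT⟩)

theorem exists_natDegree_eq_and_forall_irreducible_dvd_sub {T : F[X]} (hT : T.Monic)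
    (f : {P : F[X] // P.Monic ∧ Irreducible P ∧ P ∣ T} → F[X]) :
    ∃ r : F[X], r.natDegree = T.natDegree ∧ ∀ P, P.1 ∣ r - f P := by
  have : Finite {P : F[X] // P.Monic ∧ Irreducible P ∧ P ∣ T} :=
    (finite_monic_irreducible_dvd hT.ne_zero).to_subtype
  obtain ⟨r, hr⟩ := Ideal.exists_forall_sub_mem_ideal
    (I := fun P : {P : F[X] // P.Monic ∧ Irreducible P ∧ P ∣ T} ↦ Ideal.span {P.1})
    (fun P Q hne ↦ (Ideal.isCoprime_span_singleton_iff _ _).2 <|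
      isCoprime_of_irreducible_of_monic_of_ne P.2.2.1 Q.2.2.1 P.2.1 Q.2.1
        (Subtype.coe_injective.ne hne)) f
  refine ⟨r %ₘ T + T, natDegree_add_eq_right_of_degree_lt (degree_modByMonic_lt r hT), fun P ↦ ?_⟩
  have hmod : P.1 ∣ r %ₘ T - r := P.2.2.2.trans (dvd_modByMonic_sub r T)
  have hres : P.1 ∣ r - f P := Ideal.mem_span_singleton.1 (hr P)
  convert (hmod.add hres).add P.2.2.2 using 1
  ring

theorem dvd_sub_of_forall_monic_dvd_sub_modByMonic {g : F[X] → F[X]}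
    (hg : ∀ P : F[X], P.Monic → Irreducible P → ∀ B, P ∣ g B - g (B %ₘ P))
    {A B P : F[X]} (hP : Irreducible P) : P ∣ g (A + B * P) - g A := by
  classical
  have hassoc : Associated (normalize P) P := normalize_associated P
  have hmonic : (normalize P).Monic := monic_normalize hP.ne_zero
  have hmod : (A + B * P) %ₘ normalize P = A %ₘ normalize P :=
    modByMonic_eq_of_dvd_sub hmonic (by
      rw [add_sub_cancel_left]
      exact hassoc.dvd.mul_left B)
  have hcongr := hg _ hmonic (hassoc.irreducible_iff.2 hP)
  have hdiff := dvd_sub (hmod ▸ hcongr (A + B * P)) (hcongr A)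
  rw [sub_sub_sub_cancel_right] at hdiff
  exact hassoc.symm.dvd.trans hdiff

end ChineseRemainder

section Carlitz

theorem monic_X_pow_pow_sub_X (R : Type*) [Ring R] {q d : ℕ} (hq : 1 < q) (hd : d ≠ 0) :
    (X ^ q ^ d - X : R[X]).Monic :=
  monic_X_pow_sub (degree_X_le.trans_lt (by exact_mod_cast Nat.one_lt_pow hd hq))

variable (F : Type*) [Field F]

/-- The Carlitz product `L_n = ∏_{d = 1}^n (X ^ q ^ d - X)`, where `q` is the order of `F`. It is a
common multiple of all polynomials of degree `n`, and serves here as a modulus of known degree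
divisible by exactly the irreducibles of degree at most `n`. -/
noncomputable def carlitzL (n : ℕ) : F[X] :=
  ∏ d ∈ Finset.Icc 1 n, (X ^ Nat.card F ^ d - X)

variable [Finite F]

theorem monic_carlitzL (n : ℕ) : (carlitzL F n).Monic :=
  monic_prod_of_monic _ _ fun _ hd ↦
    monic_X_pow_pow_sub_X F Finite.one_lt_card (Nat.one_le_iff_ne_zero.1 (Finset.mem_Icc.1 hd).1)

theorem natDegree_carlitzL (n : ℕ) :
    (carlitzL F n).natDegree = ∑ d ∈ Finset.Icc 1 n, Nat.card F ^ d := by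
  have hne (d : ℕ) (hd : d ∈ Finset.Icc 1 n) : d ≠ 0 :=
    Nat.one_le_iff_ne_zero.1 (Finset.mem_Icc.1 hd).1
  rw [carlitzL, natDegree_prod_of_monic _ _ fun d hd ↦
    monic_X_pow_pow_sub_X F Finite.one_lt_card (hne d hd)]
  exact Finset.sum_congr rfl fun d hd ↦
    FiniteField.X_pow_card_pow_sub_X_natDegree_eq F (hne d hd) Finite.one_lt_card

variable {F}

theorem irreducible_dvd_carlitzL_iff {P : F[X]} (hP : Irreducible P) {n : ℕ} :
    P ∣ carlitzL F n ↔ P.natDegree ≤ n := by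
  simp only [carlitzL, hP.prime.dvd_finsetProd_iff,
    ← hP.natDegree_dvd_iff_dvd_X_pow_card_pow_sub_X, Finset.mem_Icc]
  constructor
  · rintro ⟨d, ⟨hd, hdn⟩, hdvd⟩
    exact (Nat.le_of_dvd hd hdvd).trans hdn
  · exact fun hn ↦ ⟨P.natDegree, ⟨hP.natDegree_pos, hn⟩, dvd_rfl⟩

end Carlitz

section CongruenceMap

variable {F : Type*} [Field F] [Finite F]

/-- The map `g` of the theorem: `g B` is a polynomial of the degree of `carlitzL F B.natDegree`,
congruent to `g (B %ₘ P)` modulo each monic irreducible `P` dividing that product. -/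
noncomputable def congruenceMap (B : F[X]) : F[X] :=
  (exists_natDegree_eq_and_forall_irreducible_dvd_sub (monic_carlitzL F B.natDegree)
    fun P ↦ congruenceMap (B %ₘ P.1)).choose
termination_by B.natDegree
decreasing_by
  all_goals
    exact (natDegree_modByMonic_lt B P.2.1 P.2.2.1.ne_one).trans_le
      ((irreducible_dvd_carlitzL_iff P.2.2.1).1 P.2.2.2)

theorem congruenceMap_spec (B : F[X]) :
    (congruenceMap B).natDegree = (carlitzL F B.natDegree).natDegree ∧
      ∀ P : {P : F[X] // P.Monic ∧ Irreducible P ∧ P ∣ carlitzL F B.natDegree},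
        P.1 ∣ congruenceMap B - congruenceMap (B %ₘ P.1) := by
  rw [congruenceMap.eq_def B]
  exact (exists_natDegree_eq_and_forall_irreducible_dvd_sub (monic_carlitzL F B.natDegree)
    fun P ↦ congruenceMap (B %ₘ P.1)).choose_spec

theorem dvd_congruenceMap_sub_congruenceMap_modByMonic {P : F[X]} (hPm : P.Monic)
    (hPi : Irreducible P) (B : F[X]) : P ∣ congruenceMap B - congruenceMap (B %ₘ P) := by
  rcases le_or_gt P.natDegree B.natDegree with hle | hlt
  · exact (congruenceMap_spec B).2 ⟨P, hPm, hPi, (irreducible_dvd_carlitzL_iff hPi).2 hle⟩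
  · rw [(modByMonic_eq_self_iff hPm).2 (degree_lt_degree hlt), sub_self]
    exact dvd_zero P

end CongruenceMap

section Growth

theorem pow_le_sum_Icc_pow_and_lt_two_mul_pow {q n : ℕ} (hq : 2 ≤ q) (hn : 1 ≤ n) :
    q ^ n ≤ ∑ d ∈ Finset.Icc 1 n, q ^ d ∧ ∑ d ∈ Finset.Icc 1 n, q ^ d < 2 * q ^ n := by
  have hlt : ∑ d ∈ Finset.Ico 1 n, q ^ d < q ^ n :=
    Nat.geomSum_lt hq fun _ hd ↦ (Finset.mem_Ico.1 hd).2
  rw [← Finset.sum_Ico_add_eq_sum_Icc hn]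
  omega

theorem exists_add_mul_lt_pow {q : ℕ} (hq : 2 ≤ q) (C N : ℕ) : ∃ n, 1 ≤ n ∧ C + N * n < q ^ n := by
  let m := C + 2 * N + 1
  have hm : m < 2 ^ m := Nat.lt_two_pow_self
  refine ⟨2 * m, by omega, ?_⟩
  calc C + N * (2 * m) ≤ m * m := by dsimp only [m]; nlinarith [Nat.zero_le C, Nat.zero_le N]
    _ < 2 ^ m * 2 ^ m := Nat.mul_self_lt_mul_self hm
    _ = 2 ^ (2 * m) := by rw [← pow_add, ← two_mul]
    _ ≤ q ^ (2 * m) := Nat.pow_le_pow_left hq _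

theorem exists_natDegree_eval_le {R : Type*} [CommSemiring R] (H : R[X][X]) :
    ∃ C N : ℕ, ∀ A : R[X], (H.eval A).natDegree ≤ C + N * A.natDegree := by
  refine ⟨∑ i ∈ H.support, (H.coeff i).natDegree, H.natDegree, fun A ↦ ?_⟩
  rw [eval_eq_sum, Polynomial.sum]
  refine natDegree_sum_le_of_forall_le _ _ fun i hi ↦ natDegree_mul_le.trans (add_le_add ?_ ?_)
  · exact Finset.single_le_sum (f := fun i ↦ (H.coeff i).natDegree) (fun _ _ ↦ Nat.zero_le _) hi
  · exact natDegree_pow_le.trans (Nat.mul_le_mul_right _ (le_natDegree_of_mem_supp _ hi))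

theorem exists_natDegree_le_of_eval_eq_algebraMap {R K : Type*} [CommRing R] [NoZeroDivisors R]
    [CommRing K] [Algebra R[X] K] [IsFractionRing R[X] K] {G : K[X]} {g : R[X] → R[X]}
    (hG : ∀ A, G.eval (algebraMap R[X] K A) = algebraMap R[X] K (g A)) :
    ∃ C N : ℕ, ∀ A, (g A).natDegree ≤ C + N * A.natDegree := by
  obtain ⟨b, hb, hH⟩ := IsLocalization.integerNormalization_spec (nonZeroDivisors R[X]) G
  set H := IsLocalization.integerNormalization (nonZeroDivisors R[X]) G
  have heval (A : R[X]) : H.eval A = b * g A := by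
    apply IsFractionRing.injective R[X] K
    rw [map_mul, ← hG A, ← eval_map_apply, hH, eval_smul, Algebra.smul_def]
  obtain ⟨C, N, hCN⟩ := exists_natDegree_eval_le H
  refine ⟨C, N, fun A ↦ le_trans ?_ (hCN A)⟩
  rcases eq_or_ne (g A) 0 with hg | hg
  · simp only [hg, natDegree_zero, Nat.zero_le]
  · have : Nontrivial R[X] := ⟨_, _, hg⟩
    rw [heval, natDegree_mul (nonZeroDivisors.ne_zero hb) hg]
    exact Nat.le_add_left _ _

theorem not_exists_eval_eq_algebraMap_of_pow_le_natDegree {R K : Type*} [CommRing R] [IsDomain R]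
    [CommRing K] [Algebra R[X] K] [IsFractionRing R[X] K] {g : R[X] → R[X]} {q : ℕ} (hq : 2 ≤ q)
    (hg : ∀ A, 1 ≤ A.natDegree → q ^ A.natDegree ≤ (g A).natDegree) :
    ¬ ∃ G : K[X], ∀ A, G.eval (algebraMap R[X] K A) = algebraMap R[X] K (g A) := by
  rintro ⟨G, hG⟩
  obtain ⟨C, N, hCN⟩ := exists_natDegree_le_of_eval_eq_algebraMap hG
  obtain ⟨n, hn, hlt⟩ := exists_add_mul_lt_pow hq C N
  have hge := hg (X ^ n) (by rwa [natDegree_X_pow])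
  have hle := hCN (X ^ n)
  rw [natDegree_X_pow] at hge hle
  omega

end Growth

/-- There is a map `g : 𝒜 → 𝒜` satisfying `g(A + B·P) ≡ g(A) mod P` for all `A, B ∈ 𝒜`
and irreducible `P`, such that `q^n ≤ deg(g(B)) < 2 q^n` for every `n ∈ ℕ` and every
`B ∈ 𝒜` of degree `n`; consequently `g` is not a polynomial map. -/
theorem exists_nonpolynomial_congruence_preserving_map {F : Type*} [Field F] [Fintype F]
    (q : ℕ) (hq : q = Fintype.card F) :
    ∃ g : F[X] → F[X],
      (∀ A B P : F[X], Irreducible P → P ∣ g (A + B * P) - g A) ∧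
      (∀ n : ℕ, 1 ≤ n → ∀ B : F[X], B.natDegree = n →
        q ^ n ≤ (g B).natDegree ∧ (g B).natDegree < 2 * q ^ n) ∧
      ¬ ∃ G : Polynomial (RatFunc F), ∀ A : F[X],
        Polynomial.eval (algebraMap F[X] (RatFunc F) A) G =
          algebraMap F[X] (RatFunc F) (g A) := by
  have hq_two : 2 ≤ q := hq ▸ Fintype.one_lt_card
  have hdeg (B : F[X]) (hB : 1 ≤ B.natDegree) : q ^ B.natDegree ≤ (congruenceMap B).natDegree ∧
      (congruenceMap B).natDegree < 2 * q ^ B.natDegree := by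
    rw [(congruenceMap_spec B).1, natDegree_carlitzL, Nat.card_eq_fintype_card, ← hq]
    exact pow_le_sum_Icc_pow_and_lt_two_mul_pow hq_two hB
  refine ⟨congruenceMap, fun A B P ↦ ?_, ?_, ?_⟩
  · exact dvd_sub_of_forall_monic_dvd_sub_modByMonic fun P hPm hPi ↦
      dvd_congruenceMap_sub_congruenceMap_modByMonic hPm hPi
  · rintro n hn B rfl
    exact hdeg B hn
  · exact not_exists_eval_eq_algebraMap_of_pow_le_natDegree hq_two fun A hA ↦ (hdeg A hA).1
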